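/- arXiv:2010.02576 — 2 statements merged into one kernel-verified Lean document; each statement's English description precedes it below -/
import Mathlib

section
/- Let (Ω, μ) be a probability space (modeling the random draw of an n-sample) and (Z, ν) a probability space (modeling a random data point). Let L : Ω × Z → ℝ be a jointly measurable function (L(ω, z) is the pointwise excess loss of the predictor selected on sample ω, evaluated at data point z), with L(ω, ·) integrable with respect to ν for every ω, and define the excess risk X : Ω → ℝ by X(ω) = ∫ L(ω, z) dν(z). Fix u > 0, c ∈ (0, 1], ε ≥ 0 and δ ∈ [0, 1], and assume u ≥ ε. Assume the (u, c)-witness condition: for every ω ∈ Ω, ∫ L(ω, z)·1[L(ω, z) ≤ u] dν(z) ≥ c · ∫ L(ω, z) dν(z). Assume the high-probability bound μ{ω : X(ω) > ε} ≤ δ, and that X is integrable with respect to μ. Then the expected excess risk satisfies ∫ X dμ ≤ (1/c)·(ε + (u − ε)·δ). -/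
open MeasureTheory Set

/-!
The truncated loss `L · 1(L ≤ u)` never exceeds `u`, so the witness condition caps `c * X` at `u`
everywhere, while `c * X ≤ ε` off the event `{X > ε}` because `c ≤ 1`. Integrating these two caps
gives `c * ∫ X ≤ ε + (u - ε) * μ {X > ε}`.
-/

theorem integral_indicator_setOf_le_le {Z : Type*} [MeasurableSpace Z] {ν : Measure Z}
    [IsFiniteMeasure ν] {f : Z → ℝ} (hf : Integrable f ν) {u : ℝ} (hu : 0 ≤ u) :
    ∫ z, {z' | f z' ≤ u}.indicator f z ∂ν ≤ ν.real univ * u := by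
  have truncation_integrable : Integrable ({z' | f z' ≤ u}.indicator f) ν :=
    hf.indicator₀ (nullMeasurableSet_le hf.aemeasurable aemeasurable_const)
  calc ∫ z, {z' | f z' ≤ u}.indicator f z ∂ν
      ≤ ∫ _, u ∂ν :=
        integral_mono truncation_integrable (integrable_const u)
          fun _ ↦ indicator_apply_le' id fun _ ↦ hu
    _ = ν.real univ * u := by rw [integral_const, smul_eq_mul]

theorem integral_le_of_ae_le_of_ae_le_off {Ω : Type*} [MeasurableSpace Ω] {μ : Measure Ω}
    [IsFiniteMeasure μ] {Y : Ω → ℝ} {S : Set Ω} {a b : ℝ} (hY : Integrable Y μ)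
    (hb : ∀ᵐ ω ∂μ, Y ω ≤ b) (ha : ∀ᵐ ω ∂μ, ω ∉ S → Y ω ≤ a) :
    ∫ ω, Y ω ∂μ ≤ μ.real univ * a + μ.real S * (b - a) := by
  -- The measurable hull of `S` has the same measure, so `S` itself may be non-measurable.
  set T := toMeasurable μ S
  have hT : MeasurableSet T := measurableSet_toMeasurable μ S
  have jump_integrable : Integrable (T.indicator fun _ ↦ b - a) μ :=
    (integrable_const _).indicator hT
  have le_step : ∀ᵐ ω ∂μ, Y ω ≤ a + T.indicator (fun _ ↦ b - a) ω := by
    filter_upwards [hb, ha] with ω hbω haω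
    by_cases hω : ω ∈ T
    · simpa [hω] using hbω
    · simpa [hω] using haω fun hS ↦ hω (subset_toMeasurable μ S hS)
  calc ∫ ω, Y ω ∂μ
      ≤ ∫ ω, (a + T.indicator (fun _ ↦ b - a) ω) ∂μ :=
        integral_mono_ae hY ((integrable_const a).add jump_integrable) le_step
    _ = μ.real univ * a + μ.real T * (b - a) := by
        rw [integral_add (integrable_const a) jump_integrable, integral_const,
          integral_indicator_const _ hT, smul_eq_mul, smul_eq_mul]
    _ = μ.real univ * a + μ.real S * (b - a) := by
        rw [measureReal_def μ T, measure_toMeasurable, ← measureReal_def]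

theorem highProb_implies_inExpectation_witness_general
    {Ω Z : Type*} [MeasurableSpace Ω] [MeasurableSpace Z]
    {μ : Measure Ω} {ν : Measure Z} [IsProbabilityMeasure μ] [IsProbabilityMeasure ν]
    {L : Ω → Z → ℝ} (hLint : ∀ᵐ ω ∂μ, Integrable (L ω) ν)
    {u c ε δ : ℝ} (hc : c ∈ Ioc (0 : ℝ) 1) (hε : 0 ≤ ε) (huε : ε ≤ u)
    (hwitness : ∀ᵐ ω ∂μ, c * ∫ z, L ω z ∂ν ≤ ∫ z, {z' | L ω z' ≤ u}.indicator (L ω) z ∂ν)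
    (hhp : μ.real {ω | ε < ∫ z, L ω z ∂ν} ≤ δ)
    (hXint : Integrable (fun ω ↦ ∫ z, L ω z ∂ν) μ) :
    ∫ ω, ∫ z, L ω z ∂ν ∂μ ≤ (1 / c) * (ε + (u - ε) * δ) := by
  have scaled_risk_le : ∀ᵐ ω ∂μ, c * ∫ z, L ω z ∂ν ≤ u := by
    filter_upwards [hLint, hwitness] with ω hint hwit
    simpa using hwit.trans (integral_indicator_setOf_le_le hint (hε.trans huε))
  have scaled_risk_le_off : ∀ ω ∉ {ω | ε < ∫ z, L ω z ∂ν}, c * ∫ z, L ω z ∂ν ≤ ε := fun _ hω ↦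
    (mul_le_mul_of_nonneg_left (not_lt.mp hω) hc.1.le).trans (mul_le_of_le_one_left hε hc.2)
  rw [one_div, ← div_eq_inv_mul, le_div_iff₀' hc.1]
  calc c * ∫ ω, ∫ z, L ω z ∂ν ∂μ
      = ∫ ω, c * ∫ z, L ω z ∂ν ∂μ := (integral_const_mul c _).symm
    _ ≤ ε + (u - ε) * μ.real {ω | ε < ∫ z, L ω z ∂ν} := by
        simpa [mul_comm] using integral_le_of_ae_le_of_ae_le_off (hXint.const_mul c)
          scaled_risk_le (.of_forall scaled_risk_le_off)
    _ ≤ ε + (u - ε) * δ := by gcongr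

/-- Theorem 1 of the paper: under the `(u, c)`-witness condition, a high-probability
excess-risk bound `μ {ω | X ω > ε} ≤ δ` implies the in-expectation bound
`∫ X dμ ≤ (1/c) * (ε + (u - ε) * δ)`. -/
theorem highProb_implies_inExpectation_witness
    {Ω Z : Type*} [MeasurableSpace Ω] [MeasurableSpace Z]
    (μ : Measure Ω) (ν : Measure Z) [IsProbabilityMeasure μ] [IsProbabilityMeasure ν]
    (L : Ω → Z → ℝ) (hLmeas : Measurable (Function.uncurry L))
    (hLint : ∀ ω, Integrable (L ω) ν)
    (X : Ω → ℝ) (hX : ∀ ω, X ω = ∫ z, L ω z ∂ν)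
    (u c ε δ : ℝ) (hu : 0 < u) (hc : c ∈ Set.Ioc (0 : ℝ) 1)
    (hε : 0 ≤ ε) (hδ : δ ∈ Set.Icc (0 : ℝ) 1) (huε : ε ≤ u)
    (hwitness : ∀ ω, c * ∫ z, L ω z ∂ν ≤
      ∫ z, Set.indicator {z' | L ω z' ≤ u} (L ω) z ∂ν)
    (hhp : μ {ω | X ω > ε} ≤ ENNReal.ofReal δ)
    (hXint : Integrable X μ) :
    ∫ ω, X ω ∂μ ≤ (1 / c) * (ε + (u - ε) * δ) := by
  obtain rfl : X = fun ω ↦ ∫ z, L ω z ∂ν := funext hX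
  exact highProb_implies_inExpectation_witness_general (.of_forall hLint) hc hε huε
    (.of_forall hwitness) (ENNReal.toReal_le_of_le_ofReal hδ.1 hhp) hXint
end

section
/- Let (Ω, μ) and (Z, ν) be probability spaces, L : Ω × Z → ℝ jointly measurable with L(ω, ·) integrable for every ω, and X(ω) = ∫ L(ω, z) dν(z) μ-integrable. Let u > 0, c ∈ (0, 1], and let n be a positive natural number with u·n ≥ 1. Assume the (u, c)-witness condition: for every ω, ∫ L(ω, z)·1[L(ω, z) ≤ u] dν(z) ≥ c·∫ L(ω, z) dν(z). Assume that for every δ ∈ (0, 1], μ{ω : X(ω) > 1/(δ·n)} ≤ δ. Then ∫ X dμ ≤ (1/c)·(2·√(u/n) − 1/n). -/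
open MeasureTheory Set

/-!
The witness condition turns the truncation level `u` into the pointwise bound `X ≤ u / c`. Splitting
`∫ X` at the level `ε` that is exceeded with probability at most `δ` then gives
`∫ X ≤ ε + δ (u / c - ε)`. For `ε = 1 / (δ n)` the two main terms `1 / (δ n)` and `δ u` balance at
`δ = √(1 / (u n))`, where both equal `√(u / n)`.
-/

/-- The `(u, c)`-witness condition for a single random variable `f`: truncating `f` at level `u`
keeps at least a fraction `c` of its mean. A family satisfies the condition when each member does,
with common `u` and `c`. -/
def WitnessCondition {Z : Type*} [MeasurableSpace Z] (u c : ℝ) (f : Z → ℝ) (ν : Measure Z) : Prop :=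
  c * ∫ z, f z ∂ν ≤ ∫ z, {z' | f z' ≤ u}.indicator f z ∂ν

section Truncation

variable {Z : Type*} [MeasurableSpace Z] {ν : Measure Z} {f : Z → ℝ} {u c : ℝ}

theorem integral_indicator_le_level_le [IsFiniteMeasure ν] (hf : Integrable f ν) (hu : 0 ≤ u) :
    ∫ z, {z' | f z' ≤ u}.indicator f z ∂ν ≤ ν.real univ * u := by
  have hlevel : NullMeasurableSet {z | f z ≤ u} ν :=
    nullMeasurableSet_le hf.aemeasurable aemeasurable_const
  calc ∫ z, {z' | f z' ≤ u}.indicator f z ∂ν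
      ≤ ∫ _, u ∂ν := integral_mono (hf.indicator₀ hlevel) (integrable_const u)
        (indicator_le' (fun _ hz => hz) fun _ _ => hu)
    _ = ν.real univ * u := by rw [integral_const, smul_eq_mul]

theorem WitnessCondition.integral_le_div [IsProbabilityMeasure ν] (h : WitnessCondition u c f ν)
    (hf : Integrable f ν) (hu : 0 ≤ u) (hc : 0 < c) : ∫ z, f z ∂ν ≤ u / c := by
  rw [le_div_iff₀' hc]
  calc c * ∫ z, f z ∂ν
      ≤ ν.real univ * u := h.trans (integral_indicator_le_level_le hf hu)
    _ = u := by rw [probReal_univ, one_mul]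

end Truncation

section TailSplit

variable {Ω : Type*} [MeasurableSpace Ω] {μ : Measure Ω} {X : Ω → ℝ} {B : ℝ}

theorem integral_le_add_measureReal_lt_mul [IsFiniteMeasure μ] (hX : Integrable X μ)
    (hB : ∀ᵐ ω ∂μ, X ω ≤ B) (ε : ℝ) :
    ∫ ω, X ω ∂μ ≤ μ.real univ * ε + μ.real {ω | ε < X ω} * (B - ε) := by
  set tail := {ω | ε < X ω}
  have htail : NullMeasurableSet tail μ := nullMeasurableSet_lt aemeasurable_const hX.aemeasurable
  have hexcess : Integrable (tail.indicator fun _ => B - ε) μ :=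
    (integrable_const _).indicator₀ htail
  have hsplit : ∀ᵐ ω ∂μ, X ω ≤ ε + tail.indicator (fun _ => B - ε) ω := by
    filter_upwards [hB] with ω hω
    by_cases hmem : ω ∈ tail
    · rw [indicator_of_mem hmem]
      linarith
    · rw [indicator_of_notMem hmem, add_zero]
      exact not_lt.mp hmem
  calc ∫ ω, X ω ∂μ
      ≤ ∫ ω, (ε + tail.indicator (fun _ => B - ε) ω) ∂μ :=
        integral_mono_ae hX ((integrable_const ε).add hexcess) hsplit
    _ = μ.real univ * ε + μ.real tail * (B - ε) := by
        rw [integral_add (integrable_const ε) hexcess, integral_indicator₀ htail,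
          integral_const, setIntegral_const, smul_eq_mul, smul_eq_mul]

theorem integral_le_add_mul_of_measure_lt_le [IsProbabilityMeasure μ] (hX : Integrable X μ)
    (hB : ∀ᵐ ω ∂μ, X ω ≤ B) {δ ε : ℝ} (hδ : δ ∈ Icc (0 : ℝ) 1)
    (htail : μ {ω | ε < X ω} ≤ ENNReal.ofReal δ) : ∫ ω, X ω ∂μ ≤ ε + δ * (B - ε) := by
  rcases le_total ε B with hεB | hBε
  · calc ∫ ω, X ω ∂μ
        ≤ ε + μ.real {ω | ε < X ω} * (B - ε) := by
          simpa only [probReal_univ, one_mul] using integral_le_add_measureReal_lt_mul hX hB ε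
      _ ≤ ε + δ * (B - ε) := by
          gcongr
          exact ENNReal.toReal_le_of_le_ofReal hδ.1 htail
  · calc ∫ ω, X ω ∂μ
        ≤ B := by
          simpa only [integral_const, probReal_univ, one_smul] using
            integral_mono_ae hX (integrable_const B) hB
      _ = ε + 1 * (B - ε) := by ring
      _ ≤ ε + δ * (B - ε) := by
          gcongr ε + ?_
          exact mul_le_mul_of_nonpos_right hδ.2 (sub_nonpos.mpr hBε)

end TailSplit

section OptimalConfidence

variable {u n : ℝ}

theorem sqrt_one_div_mem_Ioc {a : ℝ} (ha : 1 ≤ a) : √(1 / a) ∈ Ioc (0 : ℝ) 1 := by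
  have ha₀ : 0 < a := one_pos.trans_le ha
  exact ⟨Real.sqrt_pos.mpr (one_div_pos.mpr ha₀),
    Real.sqrt_le_one.mpr ((div_le_one ha₀).mpr ha)⟩

theorem sqrt_one_div_mul_mul_left (hu : 0 < u) : √(1 / (u * n)) * u = √(u / n) := by
  calc √(1 / (u * n)) * u = √(1 / (u * n) * u ^ 2) := by
        rw [Real.sqrt_mul' _ (sq_nonneg u), Real.sqrt_sq hu.le]
    _ = √(u / n) := by congr 1; field_simp

theorem sqrt_one_div_mul_mul_sqrt_div (hu : 0 < u) (hn : 0 < n) :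
    √(1 / (u * n)) * √(u / n) = 1 / n := by
  rw [← Real.sqrt_mul (by positivity), Real.sqrt_eq_iff_mul_self_eq_of_pos (by positivity)]
  field_simp

theorem one_div_sqrt_one_div_mul_mul (hu : 0 < u) (hn : 0 < n) :
    1 / (√(1 / (u * n)) * n) = √(u / n) := by
  have hδ : 0 < √(1 / (u * n)) := by positivity
  rw [div_eq_iff (mul_pos hδ hn).ne', mul_left_comm, ← mul_assoc,
    sqrt_one_div_mul_mul_sqrt_div hu hn, one_div_mul_cancel hn.ne']

theorem one_div_le_sqrt_div (hn : 0 < n) (hun : 1 ≤ u * n) : 1 / n ≤ √(u / n) := by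
  have hu : 0 < u := pos_of_mul_pos_left (one_pos.trans_le hun) hn.le
  rw [← sqrt_one_div_mul_mul_sqrt_div hu hn]
  exact mul_le_of_le_one_left (Real.sqrt_nonneg _) (sqrt_one_div_mem_Ioc hun).2

end OptimalConfidence

theorem one_add_one_div_mul_sub_le {a b c : ℝ} (hc : c ∈ Ioc (0 : ℝ) 1) (hba : b ≤ a) :
    (1 + 1 / c) * a - b ≤ (1 / c) * (2 * a - b) := by
  calc (1 + 1 / c) * a - b = (a - b) + a / c := by ring
    _ ≤ (a - b) / c + a / c := by
        gcongr
        exact le_div_self (sub_nonneg.mpr hba) hc.1 hc.2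
    _ = (1 / c) * (2 * a - b) := by ring

theorem simple_example_inExpectation_general {Ω Z : Type*} [MeasurableSpace Ω] [MeasurableSpace Z]
    {μ : Measure Ω} {ν : Measure Z} [IsProbabilityMeasure μ] [IsProbabilityMeasure ν]
    {L : Ω → Z → ℝ} (hL : ∀ᵐ ω ∂μ, Integrable (L ω) ν)
    (hmean : Integrable (fun ω => ∫ z, L ω z ∂ν) μ) {u c n : ℝ} (hc : 0 < c) (hn : 0 < n)
    (hun : 1 ≤ u * n) (hwitness : ∀ᵐ ω ∂μ, WitnessCondition u c (L ω) ν)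
    (htail : μ {ω | 1 / (√(1 / (u * n)) * n) < ∫ z, L ω z ∂ν} ≤
      ENNReal.ofReal √(1 / (u * n))) :
    ∫ ω, ∫ z, L ω z ∂ν ∂μ ≤ (1 + 1 / c) * √(u / n) - 1 / n := by
  have hu : 0 < u := pos_of_mul_pos_left (one_pos.trans_le hun) hn.le
  have hbound : ∀ᵐ ω ∂μ, ∫ z, L ω z ∂ν ≤ u / c := by
    filter_upwards [hL, hwitness] with ω hLω hω using hω.integral_le_div hLω hu.le hc
  rw [one_div_sqrt_one_div_mul_mul hu hn] at htail
  calc ∫ ω, ∫ z, L ω z ∂ν ∂μ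
      ≤ √(u / n) + √(1 / (u * n)) * (u / c - √(u / n)) :=
        integral_le_add_mul_of_measure_lt_le hmean hbound
          (Ioc_subset_Icc_self (sqrt_one_div_mem_Ioc hun)) htail
    _ = √(u / n) + (√(u / n) / c - 1 / n) := by
        rw [mul_sub, ← mul_div_assoc, sqrt_one_div_mul_mul_left hu,
          sqrt_one_div_mul_mul_sqrt_div hu hn]
    _ = (1 + 1 / c) * √(u / n) - 1 / n := by ring

/-- Conclusion of the paper's "Simple Example": under the `(u, c)`-witness condition
and a high-probability rate `ε(δ, n) = 1/(δ n)`, the expected excess risk is at most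
`(1/c) (2 √(u/n) - 1/n)`. -/
theorem simple_example_inExpectation
    {Ω Z : Type*} [MeasurableSpace Ω] [MeasurableSpace Z]
    (μ : Measure Ω) (ν : Measure Z) [IsProbabilityMeasure μ] [IsProbabilityMeasure ν]
    (L : Ω → Z → ℝ) (hLmeas : Measurable (Function.uncurry L))
    (hLint : ∀ ω, Integrable (L ω) ν)
    (X : Ω → ℝ) (hX : ∀ ω, X ω = ∫ z, L ω z ∂ν)
    (hXint : Integrable X μ)
    (u c : ℝ) (hu : 0 < u) (hc : c ∈ Set.Ioc (0 : ℝ) 1)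
    (n : ℕ) (hn : 0 < n) (hun : 1 ≤ u * n)
    (hwitness : ∀ ω, c * ∫ z, L ω z ∂ν ≤
      ∫ z, Set.indicator {z' | L ω z' ≤ u} (L ω) z ∂ν)
    (hhp : ∀ δ ∈ Set.Ioc (0 : ℝ) 1,
      μ {ω | X ω > 1 / (δ * n)} ≤ ENNReal.ofReal δ) :
    ∫ ω, X ω ∂μ ≤ (1 / c) * (2 * Real.sqrt (u / n) - 1 / n) := by
  obtain rfl : X = fun ω => ∫ z, L ω z ∂ν := funext hX
  have hn' : (0 : ℝ) < n := Nat.cast_pos.mpr hn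
  exact (simple_example_inExpectation_general (.of_forall hLint) hXint hc.1 hn' hun
    (.of_forall hwitness) (hhp _ (sqrt_one_div_mem_Ioc hun))).trans
    (one_add_one_div_mul_sub_le hc (one_div_le_sqrt_div hn' hun))
end
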